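/- With W^{(q)} the q-scale function and Φ_{θ+q} the largest root of ψ = θ+q, define W_y^{(θ+q,-θ)}(x+y) := W^{(θ+q)}(x+y) - θ ∫_0^x W^{(q)}(w) W^{(θ+q)}(x+y-w) dw. Then for every fixed x ≥ 0, lim_{y→∞} W_y^{(θ+q,-θ)}(x+y) / (θ W^{(θ+q)}(y)) = ∫_0^∞ W^{(q)}(x+w) e^{-Φ_{θ+q} w} dw. -/

import Mathlib

open Set Filter MeasureTheory

open Asymptotics Topology

/-! Dividing by `W^{(θ+q)}(y)` turns the quotient into `W^{(θ+q)}(x+y) / (θ W^{(θ+q)}(y))` minus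
`∫_0^x W^{(q)}(w) W^{(θ+q)}(x+y-w) / W^{(θ+q)}(y) dw`, whose integrand converges pointwise to
`W^{(q)}(w) e^{φ(x-w)}`. The domination comes from Baire's theorem: pointwise bounds on the ratios
`W^{(θ+q)}(u+y) / W^{(θ+q)}(y)` are automatically uniform for `u` in a compact set. Since
`∫_0^∞ W^{(q)}(w) e^{-φw} dw = 1/θ`, the limit `e^{φx}/θ - ∫_0^x W^{(q)}(w) e^{φ(x-w)} dw` is the
tail `∫_x^∞ W^{(q)}(w) e^{φ(x-w)} dw`. -/

theorem exists_mem_nhds_eventually_norm_add_le {G E : Type*} [Add G] [TopologicalSpace G]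
    [ContinuousAdd G] [BaireSpace G] [Nonempty G] [SeminormedAddGroup E] {l : Filter G}
    [l.IsCountablyGenerated] {f : G → E} (hf : Continuous f)
    (hO : ∀ u, (fun y => f (u + y)) =O[l] f) :
    ∃ a, ∃ U ∈ 𝓝 a, ∃ C : ℝ, ∀ᶠ y in l, ∀ u ∈ U, ‖f (u + y)‖ ≤ C * ‖f y‖ := by
  obtain ⟨B, hB⟩ := l.exists_antitone_basis
  let F : ℕ → Set G := fun n => {u | ∀ y ∈ B n, ‖f (u + y)‖ ≤ n * ‖f y‖}
  have isClosed_F (n : ℕ) : IsClosed (F n) := by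
    simp only [F, ofPred_forall]
    exact isClosed_biInter fun y _ => isClosed_le (by fun_prop) continuous_const
  have iUnion_F : ⋃ n, F n = univ := by
    refine eq_univ_of_forall fun u => mem_iUnion.2 ?_
    obtain ⟨c, hc⟩ := (hO u).bound
    obtain ⟨m, hm⟩ := hB.mem_iff.1 hc
    obtain ⟨k, hk⟩ := exists_nat_ge c
    refine ⟨max m k, fun y hy => (hm (hB.antitone (le_max_left m k) hy)).trans ?_⟩
    gcongr
    exact hk.trans (by exact_mod_cast le_max_right m k)
  obtain ⟨n, a, ha⟩ := nonempty_interior_of_iUnion_of_closed isClosed_F iUnion_F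
  exact ⟨a, F n, mem_interior_iff_mem_nhds.1 ha, n,
    mem_of_superset (hB.mem n) fun y hy u hu => hu y hy⟩

section Translation

variable {G : Type*} [AddGroup G] [TopologicalSpace G] [IsTopologicalAddGroup G] [BaireSpace G]
  {l : Filter G} [l.IsCountablyGenerated]

section NormBound

variable {E : Type*} [SeminormedAddGroup E] {f : G → E}

theorem forall_exists_mem_nhds_eventually_norm_add_le (hl : ∀ v : G, Tendsto (v + ·) l l)
    (hf : Continuous f) (hO : ∀ u, (fun y => f (u + y)) =O[l] f) (v : G) :
    ∃ V ∈ 𝓝 v, ∃ C : ℝ, ∀ᶠ y in l, ∀ u ∈ V, ‖f (u + y)‖ ≤ C * ‖f y‖ := by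
  obtain ⟨a, U, hU, C, hC⟩ := exists_mem_nhds_eventually_norm_add_le hf hO
  -- Translating by `z` carries the neighbourhood `U` of `a` to one of `v = a + z`.
  let z := -a + v
  obtain ⟨c, hc⟩ := (hO z).bound
  have hV : (fun u => u - z) ⁻¹' U ∈ 𝓝 v :=
    (continuous_sub_right z).continuousAt.preimage_mem_nhds (by simpa [z, sub_eq_add_neg] using hU)
  refine ⟨_, hV, |C| * c, ?_⟩
  filter_upwards [(hl z).eventually hC, hc] with y hCy hcy u hu
  calc ‖f (u + y)‖ = ‖f (u - z + (z + y))‖ := by rw [← add_assoc, sub_add_cancel]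
    _ ≤ C * ‖f (z + y)‖ := hCy (u - z) hu
    _ ≤ |C| * ‖f (z + y)‖ := by gcongr; exact le_abs_self C
    _ ≤ |C| * (c * ‖f y‖) := by gcongr
    _ = |C| * c * ‖f y‖ := (mul_assoc _ _ _).symm

theorem exists_eventually_norm_add_le_of_isCompact {K : Set G} (hK : IsCompact K)
    (hl : ∀ v : G, Tendsto (v + ·) l l) (hf : Continuous f)
    (hO : ∀ u, (fun y => f (u + y)) =O[l] f) :
    ∃ C : ℝ, ∀ᶠ y in l, ∀ u ∈ K, ‖f (u + y)‖ ≤ C * ‖f y‖ := by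
  refine hK.induction_on ⟨0, by simp⟩ ?_ ?_ ?_
  · rintro s t hst ⟨C, hC⟩
    exact ⟨C, hC.mono fun y hy u hu => hy u (hst hu)⟩
  · rintro s t ⟨C, hC⟩ ⟨D, hD⟩
    refine ⟨max C D, ?_⟩
    filter_upwards [hC, hD] with y hCy hDy u hu
    rcases hu with hu | hu
    · exact (hCy u hu).trans (by gcongr; exact le_max_left C D)
    · exact (hDy u hu).trans (by gcongr; exact le_max_right C D)
  · intro v _
    obtain ⟨V, hV, hC⟩ := forall_exists_mem_nhds_eventually_norm_add_le hl hf hO v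
    exact ⟨V, mem_nhdsWithin_of_mem_nhds hV, hC⟩

end NormBound

theorem tendsto_intervalIntegral_mul_div_of_tendsto_div {f ρ : G → ℝ}
    (hl : ∀ v : G, Tendsto (v + ·) l l) (hf : Continuous f) (hne : ∀ᶠ y in l, f y ≠ 0)
    (hρ : ∀ u, Tendsto (fun y => f (u + y) / f y) l (𝓝 (ρ u)))
    {μ : Measure ℝ} {a b : ℝ} {g : ℝ → ℝ} (hg : IntervalIntegrable g μ a b)
    {k : ℝ → G} (hk : Continuous k) :
    Tendsto (fun y => ∫ w in a..b, g w * (f (k w + y) / f y) ∂μ) l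
      (𝓝 (∫ w in a..b, g w * ρ (k w) ∂μ)) := by
  have hO (u : G) : (fun y => f (u + y)) =O[l] f :=
    isBigO_of_div_tendsto_nhds (hne.mono fun y hy h => absurd h hy) (ρ u) (hρ u)
  obtain ⟨C, hC⟩ :=
    exists_eventually_norm_add_le_of_isCompact (isCompact_uIcc.image hk) hl hf hO
  refine intervalIntegral.tendsto_integral_filter_of_dominated_convergence
    (fun w => ‖g w‖ * C) (.of_forall fun y => ?_) ?_ (hg.norm.mul_const C)
    (ae_of_all _ fun w _ => (hρ (k w)).const_mul (g w))
  · have hratio : Continuous fun w => f (k w + y) / f y := by fun_prop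
    exact hg.def'.aestronglyMeasurable.mul hratio.aestronglyMeasurable
  · filter_upwards [hC, hne] with y hCy hy
    refine ae_of_all _ fun w hw => ?_
    rw [norm_mul, norm_div]
    gcongr
    rw [div_le_iff₀ (norm_pos_iff.2 hy)]
    exact hCy _ (mem_image_of_mem k (uIoc_subset_uIcc hw))

end Translation

theorem setIntegral_Ioi_comp_add_left {E : Type*} [NormedAddCommGroup E] [NormedSpace ℝ E]
    (F : ℝ → E) (x a : ℝ) : ∫ w in Ioi a, F (x + w) = ∫ w in Ioi (x + a), F w := by
  simpa only [preimage_const_add_Ioi, add_sub_cancel_left] using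
    (measurePreserving_add_left volume x).setIntegral_preimage_emb
      (measurableEmbedding_addLeft x) F (Ioi (x + a))

theorem setIntegral_Ioi_comp_add_left_mul_exp {g : ℝ → ℝ} {φ x : ℝ}
    (hg : IntervalIntegrable g volume 0 x)
    (hlaplace : IntegrableOn (fun w => g w * Real.exp (-φ * w)) (Ioi 0)) :
    ∫ w in Ioi 0, g (x + w) * Real.exp (-φ * w)
      = Real.exp (φ * x) * (∫ w in Ioi 0, g w * Real.exp (-φ * w))
        - ∫ w in 0..x, g w * Real.exp (φ * (x - w)) := by
  let F : ℝ → ℝ := fun w => g w * Real.exp (φ * (x - w))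
  have F_eq (w : ℝ) : F w = Real.exp (φ * x) * (g w * Real.exp (-φ * w)) := by
    rw [mul_left_comm, ← Real.exp_add]
    simp only [F]
    ring_nf
  have F_add_left (w : ℝ) : F (x + w) = g (x + w) * Real.exp (-φ * w) := by
    simp only [F]
    ring_nf
  have F_interval : IntervalIntegrable F volume 0 x :=
    hg.mul_continuousOn (by fun_prop)
  have F_Ioi : IntegrableOn F (Ioi 0) := by
    rw [funext F_eq]
    exact hlaplace.const_mul (Real.exp (φ * x))
  calc ∫ w in Ioi 0, g (x + w) * Real.exp (-φ * w)
      = ∫ w in Ioi x, F w := by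
        simp only [← F_add_left, setIntegral_Ioi_comp_add_left, add_zero]
    _ = (∫ w in Ioi 0, F w) - ∫ w in 0..x, F w := by
        rw [← intervalIntegral.integral_interval_add_Ioi' F_interval.symm F_Ioi,
          intervalIntegral.integral_symm]
        ring
    _ = Real.exp (φ * x) * (∫ w in Ioi 0, g w * Real.exp (-φ * w)) - ∫ w in 0..x, F w := by
        rw [funext F_eq, integral_const_mul]

theorem doubly_killed_scale_ratio_limit_general
    (Wq Wpq : ℝ → ℝ) (θ φ x : ℝ) (hθ : θ ≠ 0)
    (hWq : IntervalIntegrable Wq volume 0 x) (hWpq : Continuous Wpq)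
    (hasymp : ∀ u : ℝ,
      Tendsto (fun y => Wpq (u + y) / Wpq y) atTop (𝓝 (Real.exp (φ * u))))
    (hLT : (∫ w in Ioi (0:ℝ), Wq w * Real.exp (-φ * w)) = 1 / θ) :
    Tendsto (fun y =>
        (Wpq (x + y) - θ * ∫ w in (0:ℝ)..x, Wq w * Wpq (x + y - w)) / (θ * Wpq y))
      atTop (𝓝 (∫ w in Ioi (0:ℝ), Wq (x + w) * Real.exp (-φ * w))) := by
  have hne : ∀ᶠ y in atTop, Wpq y ≠ 0 :=
    ((hasymp 0).eventually_ne (Real.exp_ne_zero _)).mono fun y hy => (div_ne_zero_iff.1 hy).2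
  have hlaplace : IntegrableOn (fun w => Wq w * Real.exp (-φ * w)) (Ioi 0) :=
    .of_integral_ne_zero (by rw [hLT]; exact one_div_ne_zero hθ)
  have hconv := tendsto_intervalIntegral_mul_div_of_tendsto_div
    (fun v => tendsto_atTop_add_const_left atTop v tendsto_id) hWpq hne hasymp hWq
    (continuous_sub_left x)
  rw [setIntegral_Ioi_comp_add_left_mul_exp hWq hlaplace, hLT, mul_one_div]
  refine (((hasymp x).div_const θ).sub hconv).congr' ?_
  filter_upwards [hne] with y hy
  simp only [sub_add_eq_add_sub, ← mul_div_assoc, intervalIntegral.integral_div]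
  field_simp

/-- Limit of `W_y^{(θ+q,-θ)}(x+y) / (θ W^{(θ+q)}(y))` as `y → ∞`, where
`W_y^{(θ+q,-θ)}(x+y) = W^{(θ+q)}(x+y) - θ ∫_0^x W^{(q)}(w) W^{(θ+q)}(x+y-w) dw`,
`φ = Φ_{θ+q}`, given the ratio asymptotics for `W^{(θ+q)}` and
`∫_0^∞ W^{(q)}(w) e^{-φ w} dw = 1/θ`. -/
theorem doubly_killed_scale_ratio_limit
    (Wq Wpq : ℝ → ℝ) (θ q φ x : ℝ)
    (hθ : 0 < θ) (hq : 0 ≤ q) (hx : 0 ≤ x)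
    (hWqcont : Continuous Wq) (hWqnn : ∀ w, 0 ≤ Wq w)
    (hWpqpos : ∀ y > 0, 0 < Wpq y) (hWpqcont : Continuous Wpq)
    (hasymp : ∀ u : ℝ,
      Tendsto (fun y => Wpq (u + y) / Wpq y) atTop (nhds (Real.exp (φ * u))))
    (hLT : (∫ w in Ioi (0:ℝ), Wq w * Real.exp (-φ * w)) = 1 / θ) :
    Tendsto (fun y =>
        (Wpq (x + y) - θ * ∫ w in (0:ℝ)..x, Wq w * Wpq (x + y - w))
          / (θ * Wpq y))
      atTop (nhds (∫ w in Ioi (0:ℝ), Wq (x + w) * Real.exp (-φ * w))) :=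
  doubly_killed_scale_ratio_limit_general Wq Wpq θ φ x hθ.ne' (hWqcont.intervalIntegrable 0 x)
    hWpqcont hasymp hLT
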